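/- Let q₁,…,q_e be Laurent polynomials in n variables with positive coefficients, let v₁,…,v_e > 0, and set P := Σ_{j=1}^e v_j · New(q_j), assumed to be n-dimensional. Define μ : ℝⁿ_{>0} → ℝⁿ by μ(x)_i := Σ_{j=1}^e v_j · (x_i · ∂q_j/∂x_i(x)) / q_j(x) for i = 1,…,n. Then μ is a smooth diffeomorphism from ℝⁿ_{>0} onto the interior of P, and its Jacobian determinant is strictly positive at every point of ℝⁿ_{>0} (μ is orientation preserving). -/

import Mathlib

open MeasureTheory Real Pointwise

open Filter Topology

/-! In logarithmic coordinates `y = log x` a Laurent polynomial becomes an exponential sum, and `μ`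
becomes the gradient of the convex function `f = ∑ j, v j * log (q j)`. The Hessian of `f` at `y` is
a nonnegative combination of covariances of the exponents under the weights
`c k * exp (a k y) / q y`. If it annihilated a direction `d ≠ 0`, then `d` would be constant on `P`,
which is impossible for full-dimensional `P`; so the gradient map is an injective local
diffeomorphism. Its values are weighted sums of means of the exponents, hence lie in `P`, and `P`
being full-dimensional they lie in the interior by openness. Conversely, if `p` is interior to `P`,
then `f - p` grows at least linearly, so it attains a minimum, where the gradient of `f` is `p`. -/

section GradientMap

variable {𝕜 E F : Type*} [NormedAddCommGroup E] [NormedAddCommGroup F]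

theorem exists_openPartialHomeomorph_of_injective_of_hasFDerivAt_equiv [RCLike 𝕜]
    [NormedSpace 𝕜 E] [NormedSpace 𝕜 F] [CompleteSpace E] {n : WithTop ℕ∞} (hn : n ≠ 0) {f : E → F}
    {f' : E → E ≃L[𝕜] F} (hf : ContDiff 𝕜 n f) (hf' : ∀ x, HasFDerivAt f (f' x : E →L[𝕜] F) x)
    (hinj : Function.Injective f) :
    ∃ Φ : OpenPartialHomeomorph E F, ⇑Φ = f ∧ Φ.source = Set.univ ∧ Φ.target = Set.range f ∧
      ContDiffOn 𝕜 n Φ.symm (Set.range f) := by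
  have hopen : IsOpenMap f := isOpenMap_of_hasStrictFDerivAt_equiv fun x =>
    hf.contDiffAt.hasStrictFDerivAt' (hf' x) hn
  have hemb : IsOpenEmbedding f := .of_continuous_injective_isOpenMap hf.continuous hinj hopen
  refine ⟨hemb.toOpenPartialHomeomorph f, by simp, by simp, by simp, fun p hp => ?_⟩
  exact ((hemb.toOpenPartialHomeomorph f).contDiffAt_symm (by simpa using hp)
    (by simpa using hf' _) (by simpa using hf.contDiffAt)).contDiffWithinAt

variable [NormedSpace ℝ E]

theorem injective_of_hasFDerivAt_of_pos {f : E → StrongDual ℝ E} {f' : E → E →L[ℝ] StrongDual ℝ E}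
    (hf : ∀ y, HasFDerivAt f (f' y) y) (hpos : ∀ y d, d ≠ 0 → 0 < f' y d d) :
    Function.Injective f := by
  intro y z hyz
  by_contra hne
  have hd : z - y ≠ 0 := sub_ne_zero.2 (Ne.symm hne)
  have hline (t : ℝ) : HasDerivAt (fun t : ℝ => y + t • (z - y)) (z - y) t := by
    simpa using ((hasDerivAt_id t).smul_const (z - y)).const_add y
  have hder (t : ℝ) : HasDerivAt (fun t : ℝ => f (y + t • (z - y)) (z - y))
      (f' (y + t • (z - y)) (z - y) (z - y)) t := by
    simpa using ((hf _).comp_hasDerivAt t (hline t)).clm_apply (hasDerivAt_const t (z - y))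
  have hmono := strictMono_of_deriv_pos (fun t => (hder t).deriv ▸ hpos _ _ hd) zero_lt_one
  simp [hyz] at hmono

theorem exists_continuousLinearEquiv_coe_eq_of_pos [FiniteDimensional ℝ E]
    {B : E →L[ℝ] StrongDual ℝ E} (hB : ∀ d, d ≠ 0 → 0 < B d d) :
    ∃ e : E ≃L[ℝ] StrongDual ℝ E, (e : E →L[ℝ] StrongDual ℝ E) = B := by
  have hinj : Function.Injective (B : E →ₗ[ℝ] StrongDual ℝ E) :=
    (injective_iff_map_eq_zero _).2 fun d hd => by
      by_contra hne
      have hBd : B d = 0 := hd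
      simpa [hBd] using hB d hne
  have hdim : Module.finrank ℝ E = Module.finrank ℝ (StrongDual ℝ E) := by
    rw [← LinearMap.toContinuousLinearMap.finrank_eq, Module.finrank_linearMap_self]
  exact ⟨(LinearMap.linearEquivOfInjective _ hinj hdim).toContinuousLinearEquiv, rfl⟩

theorem exists_openPartialHomeomorph_of_hasFDerivAt_of_pos [FiniteDimensional ℝ E]
    {n : WithTop ℕ∞} (hn : n ≠ 0) {f : E → StrongDual ℝ E} {f' : E → E →L[ℝ] StrongDual ℝ E}
    (hf : ContDiff ℝ n f) (hf' : ∀ y, HasFDerivAt f (f' y) y)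
    (hpos : ∀ y d, d ≠ 0 → 0 < f' y d d) :
    ∃ Φ : OpenPartialHomeomorph E (StrongDual ℝ E), ⇑Φ = f ∧ Φ.source = Set.univ ∧
      Φ.target = Set.range f ∧ ContDiffOn ℝ n Φ.symm (Set.range f) := by
  have := FiniteDimensional.complete ℝ E
  choose e he using fun y => exists_continuousLinearEquiv_coe_eq_of_pos (hpos y)
  exact exists_openPartialHomeomorph_of_injective_of_hasFDerivAt_equiv (f' := e) hn hf
    (fun y => (he y).symm ▸ hf' y) (injective_of_hasFDerivAt_of_pos hf' hpos)

theorem exists_forall_exists_add_mul_norm_le_of_mem_interior {P : Set (StrongDual ℝ E)}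
    {p : StrongDual ℝ E} (hp : p ∈ interior P) :
    ∃ r > 0, ∀ y, ∃ p' ∈ P, p y + r * ‖y‖ ≤ p' y := by
  obtain ⟨r, hr, hball⟩ := Metric.nhds_basis_closedBall.mem_iff.1 (mem_interior_iff_mem_nhds.1 hp)
  refine ⟨r, hr, fun y => ?_⟩
  obtain ⟨g, hg, hgy⟩ := exists_dual_vector'' ℝ y
  refine ⟨p + r • g, hball ?_, by simp [hgy]⟩
  simpa [norm_smul, abs_of_pos hr] using mul_le_of_le_one_right hr.le hg

theorem eq_zero_of_forall_mem_apply_eq {P : Set (StrongDual ℝ E)} (hP : (interior P).Nonempty)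
    {d : E} {t : ℝ} (hd : ∀ p ∈ P, p d = t) : d = 0 := by
  obtain ⟨p, hp⟩ := hP
  obtain ⟨r, hr, h⟩ := exists_forall_exists_add_mul_norm_le_of_mem_interior hp
  obtain ⟨p', hp', hle⟩ := h d
  rw [hd p (interior_subset hp), hd p' hp', add_le_iff_nonpos_right] at hle
  exact norm_le_zero_iff.1 (nonpos_of_mul_nonpos_right hle hr)

theorem tendsto_sub_cocompact_atTop_of_mem_interior {f : E → ℝ} {P : Set (StrongDual ℝ E)} {C : ℝ}
    (hf : ∀ p ∈ P, ∀ y, p y ≤ f y + C) {p : StrongDual ℝ E} (hp : p ∈ interior P)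
    [ProperSpace E] : Tendsto (fun y => f y - p y) (cocompact E) atTop := by
  obtain ⟨r, hr, h⟩ := exists_forall_exists_add_mul_norm_le_of_mem_interior hp
  have hbound (y : E) : r * ‖y‖ + -C ≤ f y - p y := by
    obtain ⟨p', hp', hle⟩ := h y
    linarith [hf p' hp' y]
  exact tendsto_atTop_mono hbound <| tendsto_atTop_add_const_right _ _ <|
    (tendsto_norm_cocompact_atTop (E := E)).const_mul_atTop hr

theorem mem_range_fderiv_of_tendsto_sub {f : E → ℝ} {f' : E → StrongDual ℝ E}
    (hf : ∀ y, HasFDerivAt f (f' y) y) {p : StrongDual ℝ E}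
    (hlim : Tendsto (fun y => f y - p y) (cocompact E) atTop) : p ∈ Set.range f' := by
  have hsub (y : E) : HasFDerivAt (fun y => f y - p y) (f' y - p) y := (hf y).sub p.hasFDerivAt
  have hcont : Continuous fun y => f y - p y :=
    continuous_iff_continuousAt.2 fun y => (hsub y).continuousAt
  obtain ⟨y, hy⟩ := hcont.exists_forall_le hlim
  exact ⟨y, sub_eq_zero.1 <| IsLocalMin.hasFDerivAt_eq_zero (Eventually.of_forall hy) (hsub y)⟩

end GradientMap

section ExponentialSum

variable {ι E : Type*} [NormedAddCommGroup E] [NormedSpace ℝ E]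

/-- The exponential sum `∑ k ∈ s, c k * exp (a k y)`, whose exponents `a k` are linear forms. -/
noncomputable def expSum (s : Finset ι) (c : ι → ℝ) (a : ι → StrongDual ℝ E) (y : E) : ℝ :=
  ∑ k ∈ s, c k * exp (a k y)

/-- The Gibbs weight of the `k`-th term of an exponential sum: its share of the whole sum. -/
noncomputable def gibbsWeight (s : Finset ι) (c : ι → ℝ) (a : ι → StrongDual ℝ E) (y : E)
    (k : ι) : ℝ :=
  c k * exp (a k y) / expSum s c a y

/-- The mean of the exponents under the Gibbs weights; it is the differential of `log expSum`. -/
noncomputable def gibbsMean (s : Finset ι) (c : ι → ℝ) (a : ι → StrongDual ℝ E) (y : E) :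
    StrongDual ℝ E :=
  ∑ k ∈ s, gibbsWeight s c a y k • a k

/-- The covariance of the exponents under the Gibbs weights, as a bilinear form on `E`; it is the
second differential of `log expSum`. -/
noncomputable def gibbsCov (s : Finset ι) (c : ι → ℝ) (a : ι → StrongDual ℝ E) (y : E) :
    E →L[ℝ] StrongDual ℝ E :=
  ∑ k ∈ s, gibbsWeight s c a y k •
    (a k - gibbsMean s c a y).smulRight (a k - gibbsMean s c a y)

variable {s : Finset ι} {c : ι → ℝ} {a : ι → StrongDual ℝ E}

theorem expSum_pos (hs : s.Nonempty) (hc : ∀ k ∈ s, 0 < c k) (y : E) : 0 < expSum s c a y :=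
  Finset.sum_pos (fun k hk => mul_pos (hc k hk) (exp_pos _)) hs

theorem gibbsWeight_pos (hc : ∀ k ∈ s, 0 < c k) (y : E) {k : ι} (hk : k ∈ s) :
    0 < gibbsWeight s c a y k :=
  div_pos (mul_pos (hc k hk) (exp_pos _)) (expSum_pos ⟨k, hk⟩ hc y)

theorem sum_gibbsWeight (hs : s.Nonempty) (hc : ∀ k ∈ s, 0 < c k) (y : E) :
    ∑ k ∈ s, gibbsWeight s c a y k = 1 := by
  simp only [gibbsWeight, ← Finset.sum_div]
  exact div_self (expSum_pos hs hc y).ne'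

theorem sum_gibbsWeight_smul_sub_gibbsMean (hs : s.Nonempty) (hc : ∀ k ∈ s, 0 < c k) (y : E) :
    ∑ k ∈ s, gibbsWeight s c a y k • (a k - gibbsMean s c a y) = 0 := by
  simp only [smul_sub, Finset.sum_sub_distrib, ← Finset.sum_smul, sum_gibbsWeight hs hc, one_smul]
  exact sub_self _

theorem gibbsMean_mem_convexHull (hs : s.Nonempty) (hc : ∀ k ∈ s, 0 < c k) (y : E) :
    gibbsMean s c a y ∈ convexHull ℝ (a '' s) :=
  (convex_convexHull ℝ _).sum_mem (fun _ hk => (gibbsWeight_pos hc y hk).le)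
    (sum_gibbsWeight hs hc y) fun k hk => subset_convexHull ℝ _ ⟨k, hk, rfl⟩

theorem contDiff_expSum {n : WithTop ℕ∞} : ContDiff ℝ n (expSum s c a) :=
  ContDiff.sum fun k _ => contDiff_const.mul (a k).contDiff.exp

theorem contDiff_gibbsMean (hs : s.Nonempty) (hc : ∀ k ∈ s, 0 < c k) {n : WithTop ℕ∞} :
    ContDiff ℝ n (gibbsMean s c a) :=
  ContDiff.sum fun k _ => ((contDiff_const.mul (a k).contDiff.exp).div contDiff_expSum
    fun y => (expSum_pos hs hc y).ne').smul contDiff_const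

theorem hasFDerivAt_mul_exp (b : ℝ) (l : StrongDual ℝ E) (y : E) :
    HasFDerivAt (fun y => b * exp (l y)) ((b * exp (l y)) • l) y := by
  simpa only [smul_smul] using l.hasFDerivAt.exp.const_mul b

theorem hasFDerivAt_expSum (hs : s.Nonempty) (hc : ∀ k ∈ s, 0 < c k) (y : E) :
    HasFDerivAt (expSum s c a) (expSum s c a y • gibbsMean s c a y) y := by
  refine (HasFDerivAt.fun_sum fun k _ => hasFDerivAt_mul_exp (c k) (a k) y).congr_fderiv ?_
  simp only [gibbsMean, gibbsWeight, Finset.smul_sum, smul_smul,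
    mul_div_cancel₀ _ (expSum_pos hs hc y).ne']

theorem hasFDerivAt_log_expSum (hs : s.Nonempty) (hc : ∀ k ∈ s, 0 < c k) (y : E) :
    HasFDerivAt (fun y => log (expSum s c a y)) (gibbsMean s c a y) y := by
  have hZ := (expSum_pos (a := a) hs hc y).ne'
  simpa only [inv_smul_smul₀ hZ] using (hasFDerivAt_expSum hs hc y).log hZ

theorem hasFDerivAt_gibbsWeight (hs : s.Nonempty) (hc : ∀ k ∈ s, 0 < c k) (y : E) (k : ι) :
    HasFDerivAt (fun y => gibbsWeight s c a y k)
      (gibbsWeight s c a y k • (a k - gibbsMean s c a y)) y := by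
  have hexp (z : E) :
      gibbsWeight s c a z k = c k * exp (a k z - log (expSum s c a z)) := by
    rw [gibbsWeight, exp_sub, exp_log (expSum_pos hs hc z), mul_div_assoc]
  simpa only [hexp, smul_smul] using
    ((a k).hasFDerivAt.fun_sub (hasFDerivAt_log_expSum hs hc y)).exp.const_mul (c k)

theorem gibbsCov_apply (hs : s.Nonempty) (hc : ∀ k ∈ s, 0 < c k) (y d : E) :
    gibbsCov s c a y d =
      ∑ k ∈ s, (gibbsWeight s c a y k • (a k - gibbsMean s c a y)) d • a k := by
  have hcentered : ∑ k ∈ s, (gibbsWeight s c a y k • (a k - gibbsMean s c a y)) d = 0 := by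
    rw [← sum_apply, sum_gibbsWeight_smul_sub_gibbsMean hs hc, zero_apply]
  calc gibbsCov s c a y d
      = ∑ k ∈ s, (gibbsWeight s c a y k • (a k - gibbsMean s c a y)) d •
          (a k - gibbsMean s c a y) := by
        simp only [gibbsCov, sum_apply, smul_apply, ContinuousLinearMap.smulRight_apply, smul_smul,
          smul_eq_mul]
    _ = ∑ k ∈ s, (gibbsWeight s c a y k • (a k - gibbsMean s c a y)) d • a k -
          (∑ k ∈ s, (gibbsWeight s c a y k • (a k - gibbsMean s c a y)) d) •
            gibbsMean s c a y := by
        rw [Finset.sum_smul, ← Finset.sum_sub_distrib]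
        exact Finset.sum_congr rfl fun k _ => smul_sub _ _ _
    _ = _ := by rw [hcentered, zero_smul, sub_zero]

theorem hasFDerivAt_gibbsMean (hs : s.Nonempty) (hc : ∀ k ∈ s, 0 < c k) (y : E) :
    HasFDerivAt (gibbsMean s c a) (gibbsCov s c a y) y := by
  refine (HasFDerivAt.fun_sum fun k _ =>
    (hasFDerivAt_gibbsWeight hs hc y k).smul_const (a k)).congr_fderiv ?_
  ext1 d
  simp only [gibbsCov_apply hs hc, sum_apply, ContinuousLinearMap.smulRight_apply]

theorem gibbsCov_apply_comm (y d d' : E) : gibbsCov s c a y d d' = gibbsCov s c a y d' d := by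
  simp only [gibbsCov, sum_apply, smul_apply, ContinuousLinearMap.smulRight_apply, smul_eq_mul,
    mul_comm]

theorem gibbsCov_apply_self (y d : E) : gibbsCov s c a y d d =
    ∑ k ∈ s, gibbsWeight s c a y k * ((a k - gibbsMean s c a y) d) ^ 2 := by
  simp only [gibbsCov, sum_apply, smul_apply, ContinuousLinearMap.smulRight_apply, smul_eq_mul, sq]

theorem gibbsCov_apply_self_nonneg (hc : ∀ k ∈ s, 0 < c k) (y d : E) :
    0 ≤ gibbsCov s c a y d d := by
  rw [gibbsCov_apply_self]
  exact Finset.sum_nonneg fun k hk => mul_nonneg (gibbsWeight_pos hc y hk).le (sq_nonneg _)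

theorem apply_eq_gibbsMean_apply_of_gibbsCov_eq_zero (hc : ∀ k ∈ s, 0 < c k) {y d : E}
    (hd : gibbsCov s c a y d d = 0) {l : StrongDual ℝ E} (hl : l ∈ convexHull ℝ (a '' s)) :
    l d = gibbsMean s c a y d := by
  rw [gibbsCov_apply_self, Finset.sum_eq_zero_iff_of_nonneg fun k hk =>
    mul_nonneg (gibbsWeight_pos hc y hk).le (sq_nonneg _)] at hd
  have hconv : Convex ℝ {l : StrongDual ℝ E | l d = gibbsMean s c a y d} :=
    convex_hyperplane (ContinuousLinearMap.apply ℝ ℝ d).toLinearMap.isLinear _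
  refine convexHull_min (Set.image_subset_iff.2 fun k hk => ?_) hconv hl
  simpa [(gibbsWeight_pos hc y hk).ne', sub_eq_zero] using hd k hk

theorem apply_le_log_expSum_add (hc : ∀ k ∈ s, 0 < c k) {l : StrongDual ℝ E}
    (hl : l ∈ convexHull ℝ (a '' s)) (y : E) :
    l y ≤ log (expSum s c a y) + ∑ k ∈ s, |log (c k)| := by
  have hconv : Convex ℝ
      {l : StrongDual ℝ E | l y ≤ log (expSum s c a y) + ∑ k ∈ s, |log (c k)|} :=
    convex_halfSpace_le (ContinuousLinearMap.apply ℝ ℝ y).toLinearMap.isLinear _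
  refine convexHull_min (Set.image_subset_iff.2 fun k hk => ?_) hconv hl
  have hterm : log (c k) + a k y ≤ log (expSum s c a y) := by
    rw [← log_exp (a k y), ← log_mul (hc k hk).ne' (exp_pos _).ne']
    exact log_le_log (mul_pos (hc k hk) (exp_pos _)) <|
      Finset.single_le_sum (f := fun k => c k * exp (a k y))
        (fun j hj => (mul_pos (hc j hj) (exp_pos _)).le) hk
  have habs : |log (c k)| ≤ ∑ k ∈ s, |log (c k)| :=
    Finset.single_le_sum (f := fun k => |log (c k)|) (fun _ _ => abs_nonneg _) hk
  change a k y ≤ _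
  linarith [neg_abs_le (log (c k))]

end ExponentialSum

section MomentMap

variable {κ ι E : Type*} [Fintype κ] [NormedAddCommGroup E] [NormedSpace ℝ E]

/-- The weighted Minkowski sum `∑ j, v j • conv {a j k | k ∈ s j}` of the polytopes spanned by the
exponents of a family of exponential sums. -/
def exponentPolytope {V : Type*} [AddCommGroup V] [Module ℝ V] (s : κ → Finset ι)
    (a : κ → ι → V) (v : κ → ℝ) : Set V :=
  ∑ j, v j • convexHull ℝ (a j '' s j)

/-- The moment map `∑ j, v j • gibbsMean (s j) (c j) (a j)` of a family of exponential sums: the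
differential of `∑ j, v j * log (expSum (s j) (c j) (a j) y)`. -/
noncomputable def momentMap (s : κ → Finset ι) (c : κ → ι → ℝ) (a : κ → ι → StrongDual ℝ E)
    (v : κ → ℝ) (y : E) : StrongDual ℝ E :=
  ∑ j, v j • gibbsMean (s j) (c j) (a j) y

/-- The differential of the moment map, i.e. the Hessian of
`∑ j, v j * log (expSum (s j) (c j) (a j) y)`. -/
noncomputable def momentHessian (s : κ → Finset ι) (c : κ → ι → ℝ) (a : κ → ι → StrongDual ℝ E)
    (v : κ → ℝ) (y : E) : E →L[ℝ] StrongDual ℝ E :=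
  ∑ j, v j • gibbsCov (s j) (c j) (a j) y

theorem mem_exponentPolytope {V : Type*} [AddCommGroup V] [Module ℝ V] {s : κ → Finset ι}
    {a : κ → ι → V} {v : κ → ℝ} {p : V} :
    p ∈ exponentPolytope s a v ↔
      ∃ l : κ → V, (∀ j, l j ∈ convexHull ℝ (a j '' s j)) ∧ ∑ j, v j • l j = p := by
  rw [exponentPolytope, Set.mem_fintype_sum]
  constructor
  · rintro ⟨g, hg, rfl⟩
    choose l hl hlg using fun j => Set.mem_smul_set.1 (hg j)
    exact ⟨l, hl, by simp only [hlg]⟩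
  · rintro ⟨l, hl, rfl⟩
    exact ⟨_, fun j => Set.smul_mem_smul_set (hl j), rfl⟩

theorem image_exponentPolytope {V W : Type*} [AddCommGroup V] [Module ℝ V] [AddCommGroup W]
    [Module ℝ W] (T : V →ₗ[ℝ] W) (s : κ → Finset ι) (a : κ → ι → V) (v : κ → ℝ) :
    T '' exponentPolytope s a v = exponentPolytope s (fun j k => T (a j k)) v := by
  simp only [exponentPolytope, Set.image_finsetSum, image_smul_set, T.image_convexHull,
    Set.image_image]

variable {s : κ → Finset ι} {c : κ → ι → ℝ} {a : κ → ι → StrongDual ℝ E} {v : κ → ℝ}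

theorem contDiff_momentMap (hs : ∀ j, (s j).Nonempty) (hc : ∀ j, ∀ k ∈ s j, 0 < c j k)
    {n : WithTop ℕ∞} : ContDiff ℝ n (momentMap s c a v) :=
  ContDiff.sum fun j _ => (contDiff_gibbsMean (hs j) (hc j)).const_smul (v j)

theorem hasFDerivAt_sum_mul_log_expSum (hs : ∀ j, (s j).Nonempty)
    (hc : ∀ j, ∀ k ∈ s j, 0 < c j k) (y : E) :
    HasFDerivAt (fun y => ∑ j, v j * log (expSum (s j) (c j) (a j) y)) (momentMap s c a v y) y :=
  HasFDerivAt.fun_sum fun j _ => (hasFDerivAt_log_expSum (hs j) (hc j) y).const_mul (v j)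

theorem hasFDerivAt_momentMap (hs : ∀ j, (s j).Nonempty) (hc : ∀ j, ∀ k ∈ s j, 0 < c j k)
    (y : E) : HasFDerivAt (momentMap s c a v) (momentHessian s c a v y) y :=
  HasFDerivAt.fun_sum fun j _ => (hasFDerivAt_gibbsMean (hs j) (hc j) y).const_smul (v j)

theorem momentHessian_apply (y d d' : E) : momentHessian s c a v y d d' =
    ∑ j, v j * gibbsCov (s j) (c j) (a j) y d d' := by
  simp only [momentHessian, sum_apply, smul_apply, smul_eq_mul]

theorem momentHessian_apply_comm (y d d' : E) :
    momentHessian s c a v y d d' = momentHessian s c a v y d' d := by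
  simp only [momentHessian_apply, gibbsCov_apply_comm _ d d']

theorem momentHessian_apply_self_pos (hc : ∀ j, ∀ k ∈ s j, 0 < c j k) (hv : ∀ j, 0 ≤ v j)
    (hP : (interior (exponentPolytope s a v)).Nonempty) (y : E) {d : E} (hd : d ≠ 0) :
    0 < momentHessian s c a v y d d := by
  have hterm (j : κ) : 0 ≤ v j * gibbsCov (s j) (c j) (a j) y d d :=
    mul_nonneg (hv j) (gibbsCov_apply_self_nonneg (hc j) y d)
  rw [momentHessian_apply]
  refine (Finset.sum_nonneg fun j _ => hterm j).lt_of_ne' fun hzero => hd ?_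
  refine eq_zero_of_forall_mem_apply_eq hP (t := momentMap s c a v y d) fun p hp => ?_
  obtain ⟨l, hl, rfl⟩ := mem_exponentPolytope.1 hp
  simp only [momentMap, sum_apply, smul_apply]
  refine Finset.sum_congr rfl fun j hj => ?_
  rcases mul_eq_zero.1 ((Finset.sum_eq_zero_iff_of_nonneg fun j _ => hterm j).1 hzero j hj)
    with hvj | hcov
  · simp only [hvj, zero_smul]
  · rw [apply_eq_gibbsMean_apply_of_gibbsCov_eq_zero (hc j) hcov (hl j)]

theorem momentMap_mem_exponentPolytope (hs : ∀ j, (s j).Nonempty)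
    (hc : ∀ j, ∀ k ∈ s j, 0 < c j k) (y : E) : momentMap s c a v y ∈ exponentPolytope s a v :=
  mem_exponentPolytope.2 ⟨_, fun j => gibbsMean_mem_convexHull (hs j) (hc j) y, rfl⟩

theorem apply_le_sum_mul_log_expSum_add (hc : ∀ j, ∀ k ∈ s j, 0 < c j k) (hv : ∀ j, 0 ≤ v j)
    {p : StrongDual ℝ E} (hp : p ∈ exponentPolytope s a v) (y : E) :
    p y ≤ ∑ j, v j * log (expSum (s j) (c j) (a j) y) +
      ∑ j, v j * ∑ k ∈ s j, |log (c j k)| := by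
  obtain ⟨l, hl, rfl⟩ := mem_exponentPolytope.1 hp
  simp only [sum_apply, smul_apply, smul_eq_mul, ← Finset.sum_add_distrib, ← mul_add]
  gcongr with j
  · exact hv j
  · exact apply_le_log_expSum_add (hc j) (hl j) y

variable [FiniteDimensional ℝ E]

theorem interior_exponentPolytope_subset_range_momentMap (hs : ∀ j, (s j).Nonempty)
    (hc : ∀ j, ∀ k ∈ s j, 0 < c j k) (hv : ∀ j, 0 ≤ v j) :
    interior (exponentPolytope s a v) ⊆ Set.range (momentMap s c a v) := fun _ hp =>
  have := FiniteDimensional.proper_real E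
  mem_range_fderiv_of_tendsto_sub (hasFDerivAt_sum_mul_log_expSum hs hc) <|
    tendsto_sub_cocompact_atTop_of_mem_interior
      (fun _ hp' => apply_le_sum_mul_log_expSum_add hc hv hp') hp

theorem exists_openPartialHomeomorph_momentMap (hs : ∀ j, (s j).Nonempty)
    (hc : ∀ j, ∀ k ∈ s j, 0 < c j k) (hv : ∀ j, 0 ≤ v j)
    (hP : (interior (exponentPolytope s a v)).Nonempty) {n : WithTop ℕ∞} (hn : n ≠ 0) :
    ∃ Φ : OpenPartialHomeomorph E (StrongDual ℝ E), ⇑Φ = momentMap s c a v ∧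
      Φ.source = Set.univ ∧ Φ.target = interior (exponentPolytope s a v) ∧
      ContDiffOn ℝ n Φ.symm (interior (exponentPolytope s a v)) := by
  obtain ⟨Φ, hΦ, hsource, htarget, hsymm⟩ := exists_openPartialHomeomorph_of_hasFDerivAt_of_pos hn
    (contDiff_momentMap hs hc) (hasFDerivAt_momentMap hs hc)
    fun y _ hd => momentHessian_apply_self_pos hc hv hP y hd
  have hrange : Set.range (momentMap s c a v) = interior (exponentPolytope s a v) :=
    (interior_maximal (Set.range_subset_iff.2 (momentMap_mem_exponentPolytope hs hc))
      (htarget ▸ Φ.open_target)).antisymm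
      (interior_exponentPolytope_subset_range_momentMap hs hc hv)
  exact ⟨Φ, hΦ, hsource, hrange ▸ htarget, hrange ▸ hsymm⟩

end MomentMap

section Posynomial

variable {σ : Type*}

theorem hasFDerivAt_log_pi [Finite σ] {x : σ → ℝ} (hx : ∀ i, 0 < x i) :
    HasFDerivAt (fun (x : σ → ℝ) i => log (x i))
      (ContinuousLinearMap.pi fun i =>
        ((x i)⁻¹ • ContinuousLinearMap.id ℝ ℝ).comp (ContinuousLinearMap.proj i)) x := by
  have := Fintype.ofFinite σ
  refine hasFDerivAt_pi.2 fun i => ((hasFDerivAt_apply i x).log (hx i).ne').congr_fderiv ?_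
  rw [ContinuousLinearMap.smul_comp, ContinuousLinearMap.id_comp]

theorem isOpen_pi_Ioi_zero [Finite σ] : IsOpen (Set.univ.pi fun _ : σ => Set.Ioi (0 : ℝ)) :=
  isOpen_set_pi Set.finite_univ fun _ _ => isOpen_Ioi

theorem pi_comp_proj_apply_single {R M : Type*} [DecidableEq σ] [Semiring R] [AddCommMonoid M]
    [Module R M] [TopologicalSpace M] (f : σ → M →L[R] M) (i : σ) (z : M) :
    ContinuousLinearMap.pi (fun j => (f j).comp (ContinuousLinearMap.proj j)) (Pi.single i z) =
      Pi.single i (f i z) := by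
  ext j
  exact Pi.apply_single (fun j => f j) (fun j => map_zero _) i z j

variable [Fintype σ]

theorem contDiffOn_log_pi {n : WithTop ℕ∞} :
    ContDiffOn ℝ n (fun (x : σ → ℝ) i => log (x i)) (Set.univ.pi fun _ => Set.Ioi 0) :=
  contDiffOn_pi.2 fun i => (contDiff_apply ℝ ℝ i).contDiffOn.log fun _ hx => (hx i trivial).ne'

theorem contDiff_exp_pi {n : WithTop ℕ∞} : ContDiff ℝ n (fun (y : σ → ℝ) i => exp (y i)) :=
  contDiff_pi.2 fun i => (contDiff_apply ℝ ℝ i).exp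

variable [DecidableEq σ]

variable (σ) in
/-- The identification of `σ → ℝ` with its dual given by the dot product; it turns exponent vectors
into linear forms. -/
noncomputable def dotProductCLE : (σ → ℝ) ≃L[ℝ] StrongDual ℝ (σ → ℝ) :=
  (dotProductEquiv ℝ σ ≪≫ₗ LinearMap.toContinuousLinearMap).toContinuousLinearEquiv

theorem dotProductCLE_apply (u y : σ → ℝ) : dotProductCLE σ u y = u ⬝ᵥ y := rfl

theorem dotProductCLE_symm_apply (l : StrongDual ℝ (σ → ℝ)) (i : σ) :
    (dotProductCLE σ).symm l i = l (Pi.single i 1) := rfl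

theorem det_dotProductCLE_symm_comp_pos {B : (σ → ℝ) →L[ℝ] StrongDual ℝ (σ → ℝ)}
    (hsymm : ∀ d d', B d d' = B d' d) (hpos : ∀ d, d ≠ 0 → 0 < B d d) :
    0 < (((dotProductCLE σ).symm : StrongDual ℝ (σ → ℝ) →L[ℝ] σ → ℝ).comp B).det := by
  set L := ((dotProductCLE σ).symm : StrongDual ℝ (σ → ℝ) →L[ℝ] σ → ℝ).comp B
  have hL (d d' : σ → ℝ) : d' ⬝ᵥ L d = B d d' := by
    rw [dotProduct_comm, ← dotProductCLE_apply]
    simp [L]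
  rw [ContinuousLinearMap.det, ← LinearMap.det_toMatrix']
  refine (Matrix.PosDef.of_dotProduct_mulVec_pos ?_ fun d hd => ?_).det_pos
  · ext i j
    simpa [LinearMap.toMatrix'_apply, L, dotProductCLE_symm_apply] using hsymm _ _
  · rw [LinearMap.toMatrix'_mulVec, star_trivial]
    exact (hL d d).symm ▸ hpos d hd

theorem sum_mul_prod_rpow_eq_expSum {ι : Type*} (s : Finset ι) (c : ι → ℝ) (a : ι → σ → ℝ)
    {x : σ → ℝ} (hx : ∀ i, 0 < x i) :
    ∑ k ∈ s, c k * ∏ i, x i ^ a k i =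
      expSum s c (fun k => dotProductCLE σ (a k)) fun i => log (x i) := by
  simp only [expSum, dotProductCLE_apply, dotProduct, exp_sum, rpow_def_of_pos (hx _), mul_comm]

theorem mul_fderiv_div_eq_gibbsMean {ι : Type*} {s : Finset ι} (hs : s.Nonempty) {c : ι → ℝ}
    (hc : ∀ k ∈ s, 0 < c k) {a : ι → σ → ℝ} {q : (σ → ℝ) → ℝ}
    (hq : ∀ x, (∀ i, 0 < x i) → q x = ∑ k ∈ s, c k * ∏ i, x i ^ a k i)
    {x : σ → ℝ} (hx : ∀ i, 0 < x i) (i : σ) :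
    x i * fderiv ℝ q x (Pi.single i 1) / q x =
      gibbsMean s c (fun k => dotProductCLE σ (a k)) (fun i => log (x i)) (Pi.single i 1) := by
  have hqlog : ∀ z ∈ Set.univ.pi fun _ => Set.Ioi (0 : ℝ),
      q z = expSum s c (fun k => dotProductCLE σ (a k)) fun i => log (z i) := fun z hz =>
    (hq z fun i => hz i trivial).trans (sum_mul_prod_rpow_eq_expSum s c a fun i => hz i trivial)
  have hxS : x ∈ Set.univ.pi fun _ => Set.Ioi (0 : ℝ) := fun i _ => hx i
  have hderiv := ((hasFDerivAt_expSum (a := fun k => dotProductCLE σ (a k)) hs hc _).comp x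
    (hasFDerivAt_log_pi hx)).congr_of_eventuallyEq
    (eventually_of_mem (isOpen_pi_Ioi_zero.mem_nhds hxS) hqlog)
  rw [hderiv.fderiv, ← hqlog x hxS, ContinuousLinearMap.comp_apply, pi_comp_proj_apply_single]
  have hqx : q x ≠ 0 := hqlog x hxS ▸ (expSum_pos hs hc _).ne'
  have hxi := (hx i).ne'
  rw [smul_apply, smul_apply, ContinuousLinearMap.id_apply, Pi.single_smul, map_smul, smul_eq_mul,
    smul_eq_mul]
  field_simp

variable {κ ι : Type*} [Fintype κ]

/-- The moment map in the multiplicative coordinates `x = exp y`, for exponent vectors `a j k` in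
place of linear forms. -/
noncomputable def toricMomentMap (s : κ → Finset ι) (c : κ → ι → ℝ) (a : κ → ι → σ → ℝ)
    (v : κ → ℝ) (x : σ → ℝ) : σ → ℝ :=
  (dotProductCLE σ).symm
    (momentMap s c (fun j k => dotProductCLE σ (a j k)) v fun i => log (x i))

variable {s : κ → Finset ι} {c : κ → ι → ℝ} {a : κ → ι → σ → ℝ} {v : κ → ℝ}

theorem toricMomentMap_apply_eq_sum_fderiv (hs : ∀ j, (s j).Nonempty)
    (hc : ∀ j, ∀ k ∈ s j, 0 < c j k) {q : κ → (σ → ℝ) → ℝ}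
    (hq : ∀ j x, (∀ i, 0 < x i) → q j x = ∑ k ∈ s j, c j k * ∏ i, x i ^ a j k i)
    {x : σ → ℝ} (hx : ∀ i, 0 < x i) (i : σ) :
    toricMomentMap s c a v x i =
      ∑ j, v j * (x i * fderiv ℝ (q j) x (Pi.single i 1)) / q j x := by
  simp only [mul_div_assoc (v _), mul_fderiv_div_eq_gibbsMean (hs _) (hc _) (hq _) hx,
    toricMomentMap, dotProductCLE_symm_apply, momentMap, sum_apply, smul_apply, smul_eq_mul]

theorem interior_exponentPolytope_dotProductCLE :
    interior (exponentPolytope s (fun j k => dotProductCLE σ (a j k)) v) =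
      dotProductCLE σ '' interior (exponentPolytope s a v) := by
  refine Eq.trans ?_ ((dotProductCLE σ).toHomeomorph.image_interior _).symm
  exact congrArg interior (image_exponentPolytope (dotProductCLE σ).toLinearMap s a v).symm

theorem contDiffOn_toricMomentMap (hs : ∀ j, (s j).Nonempty) (hc : ∀ j, ∀ k ∈ s j, 0 < c j k)
    {n : WithTop ℕ∞} : ContDiffOn ℝ n (toricMomentMap s c a v) (Set.univ.pi fun _ => Set.Ioi 0) :=
  ((dotProductCLE σ).symm.contDiff.comp (contDiff_momentMap hs hc)).comp_contDiffOn
    contDiffOn_log_pi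

theorem exists_openPartialHomeomorph_toricMomentMap (hs : ∀ j, (s j).Nonempty)
    (hc : ∀ j, ∀ k ∈ s j, 0 < c j k) (hv : ∀ j, 0 ≤ v j)
    (hP : (interior (exponentPolytope s a v)).Nonempty) {n : WithTop ℕ∞} (hn : n ≠ 0) :
    ∃ Φ : OpenPartialHomeomorph (σ → ℝ) (σ → ℝ), ⇑Φ = toricMomentMap s c a v ∧
      Φ.source = (Set.univ.pi fun _ => Set.Ioi 0) ∧
      Φ.target = interior (exponentPolytope s a v) ∧
      ContDiffOn ℝ n Φ.symm (interior (exponentPolytope s a v)) := by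
  let T := dotProductCLE σ
  have hint := interior_exponentPolytope_dotProductCLE (s := s) (a := a) (v := v)
  obtain ⟨Ψ, hΨ, hsource, htarget, hsymm⟩ :=
    exists_openPartialHomeomorph_momentMap hs hc hv (hint ▸ hP.image T) hn
  let logChart := OpenPartialHomeomorph.pi fun _ : σ => expPartialHomeomorph.symm
  have hlog_target : logChart.target = Set.univ := Set.pi_univ _
  refine ⟨(logChart.trans Ψ).transHomeomorph T.symm.toHomeomorph, ?_, ?_, ?_, ?_⟩
  · rw [OpenPartialHomeomorph.transHomeomorph_apply, OpenPartialHomeomorph.coe_trans, hΨ]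
    rfl
  · rw [OpenPartialHomeomorph.transHomeomorph_source, OpenPartialHomeomorph.trans_source, hsource,
      Set.preimage_univ, Set.inter_univ]
    rfl
  · rw [OpenPartialHomeomorph.transHomeomorph_target, OpenPartialHomeomorph.trans_target,
      hlog_target, Set.preimage_univ, Set.inter_univ, htarget, hint]
    exact Set.preimage_image_eq _ T.injective
  · exact contDiff_exp_pi.comp_contDiffOn <| hsymm.comp T.contDiff.contDiffOn fun p hp =>
      hint ▸ Set.mem_image_of_mem T hp

theorem hasFDerivAt_toricMomentMap (hs : ∀ j, (s j).Nonempty)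
    (hc : ∀ j, ∀ k ∈ s j, 0 < c j k) {x : σ → ℝ} (hx : ∀ i, 0 < x i) :
    HasFDerivAt (toricMomentMap s c a v)
      ((((dotProductCLE σ).symm : StrongDual ℝ (σ → ℝ) →L[ℝ] σ → ℝ).comp
        (momentHessian s c (fun j k => dotProductCLE σ (a j k)) v fun i => log (x i))).comp
        (ContinuousLinearMap.pi fun i =>
          ((x i)⁻¹ • ContinuousLinearMap.id ℝ ℝ).comp (ContinuousLinearMap.proj i))) x :=
  ((dotProductCLE σ).symm.hasFDerivAt.comp _ (hasFDerivAt_momentMap hs hc _)).comp x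
    (hasFDerivAt_log_pi hx)

theorem det_fderiv_toricMomentMap_pos (hs : ∀ j, (s j).Nonempty)
    (hc : ∀ j, ∀ k ∈ s j, 0 < c j k) (hv : ∀ j, 0 ≤ v j)
    (hP : (interior (exponentPolytope s a v)).Nonempty) {x : σ → ℝ} (hx : ∀ i, 0 < x i) :
    0 < (fderiv ℝ (toricMomentMap s c a v) x).det := by
  have hint := interior_exponentPolytope_dotProductCLE (s := s) (a := a) (v := v)
  rw [(hasFDerivAt_toricMomentMap hs hc hx).fderiv, ContinuousLinearMap.det,
    ContinuousLinearMap.toLinearMap_comp, LinearMap.det_comp]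
  refine mul_pos (det_dotProductCLE_symm_comp_pos (momentHessian_apply_comm _) fun d hd =>
    momentHessian_apply_self_pos hc hv (hint ▸ hP.image _) _ hd) ?_
  refine (Finset.prod_pos fun i _ => ?_).trans_eq (ContinuousLinearMap.det_pi _).symm
  simpa using hx i

end Posynomial

theorem stmt_13_general {κ ι σ : Type*} [Fintype κ] [Fintype σ] [DecidableEq σ]
    (s : κ → Finset ι) (hs : ∀ j, (s j).Nonempty) (c : κ → ι → ℝ)
    (hc : ∀ j, ∀ k ∈ s j, 0 < c j k) (a : κ → ι → σ → ℝ) (q : κ → (σ → ℝ) → ℝ)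
    (hq : ∀ j x, (∀ i, 0 < x i) → q j x = ∑ k ∈ s j, c j k * ∏ i, x i ^ a j k i)
    (v : κ → ℝ) (hv : ∀ j, 0 ≤ v j) (hP : (interior (exponentPolytope s a v)).Nonempty)
    (μ : (σ → ℝ) → σ → ℝ) (hμ : ∀ x, (∀ i, 0 < x i) →
      μ x = fun i => ∑ j, v j * (x i * fderiv ℝ (q j) x (Pi.single i 1)) / q j x) :
    (∃ Φ : PartialHomeomorph (σ → ℝ) (σ → ℝ),
        Φ.source = (Set.univ.pi fun _ => Set.Ioi 0) ∧
        Φ.target = interior (exponentPolytope s a v) ∧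
        (∀ x ∈ Set.univ.pi fun _ => Set.Ioi 0, Φ x = μ x) ∧
        ContDiffOn ℝ (⊤ : ℕ∞) Φ (Set.univ.pi fun _ => Set.Ioi 0) ∧
        ContDiffOn ℝ (⊤ : ℕ∞) Φ.symm (interior (exponentPolytope s a v))) ∧
      ∀ x ∈ Set.univ.pi fun _ => Set.Ioi 0, 0 < LinearMap.det
        ((fderiv ℝ μ x : (σ → ℝ) →L[ℝ] (σ → ℝ)) : (σ → ℝ) →ₗ[ℝ] (σ → ℝ)) := by
  have heq : Set.EqOn μ (toricMomentMap s c a v) (Set.univ.pi fun _ => Set.Ioi 0) := fun x hx => by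
    have hpos (i : σ) : 0 < x i := hx i trivial
    ext i
    rw [hμ x hpos, toricMomentMap_apply_eq_sum_fderiv hs hc hq hpos]
  refine ⟨?_, fun x hx => ?_⟩
  · obtain ⟨Φ, hΦ, hsource, htarget, hsymm⟩ :=
      exists_openPartialHomeomorph_toricMomentMap hs hc hv hP (n := (⊤ : ℕ∞)) (by simp)
    have hsmooth : ContDiffOn ℝ (⊤ : ℕ∞) Φ (Set.univ.pi fun _ => Set.Ioi 0) :=
      (contDiffOn_toricMomentMap hs hc).congr fun x _ => congrFun hΦ x
    exact ⟨Φ.toPartialHomeomorph, hsource, htarget,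
      fun x hx => (congrFun hΦ x).trans (heq hx).symm, hsmooth, hsymm⟩
  · have hgerm : μ =ᶠ[𝓝 x] toricMomentMap s c a v :=
      heq.eventuallyEq_of_mem (isOpen_pi_Ioi_zero.mem_nhds hx)
    rw [hgerm.fderiv_eq]
    exact det_fderiv_toricMomentMap_pos hs hc hv hP fun i => hx i trivial

/-- The toric logarithmic-derivative (Newton polytope) map
`μ(x)ᵢ = Σ_j v_j·(xᵢ·∂q_j/∂xᵢ(x))/q_j(x)` is an orientation-preserving smooth
diffeomorphism from the positive orthant onto the interior of
`P = Σ_j v_j·New(q_j)`, with everywhere strictly positive Jacobian determinant. -/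
theorem stmt_13 (n e : ℕ) (A : Fin e → Finset (Fin n → ℤ)) (hA : ∀ j, (A j).Nonempty)
    (c : Fin e → (Fin n → ℤ) → ℝ) (hc : ∀ j, ∀ ω ∈ A j, 0 < c j ω)
    (q : Fin e → (Fin n → ℝ) → ℝ)
    (hq : ∀ j x, q j x = ∑ ω ∈ A j, c j ω * ∏ i, x i ^ (ω i))
    (v : Fin e → ℝ) (hv : ∀ j, 0 < v j)
    (P : Set (Fin n → ℝ))
    (hP : P = ∑ j, v j •
        convexHull ℝ ((fun ω : Fin n → ℤ => fun i => (ω i : ℝ)) '' ↑(A j)))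
    (hPdim : (interior P).Nonempty)
    (S : Set (Fin n → ℝ)) (hS : S = Set.univ.pi fun _ : Fin n => Set.Ioi (0 : ℝ))
    (μ : (Fin n → ℝ) → (Fin n → ℝ))
    (hμ : ∀ x, μ x = fun i =>
        ∑ j, v j * (x i * fderiv ℝ (q j) x (Pi.single i 1)) / q j x) :
    (∃ Φ : PartialHomeomorph (Fin n → ℝ) (Fin n → ℝ),
        Φ.source = S ∧ Φ.target = interior P ∧ (∀ x ∈ S, Φ x = μ x) ∧
        ContDiffOn ℝ (⊤ : ℕ∞) Φ S ∧ ContDiffOn ℝ (⊤ : ℕ∞) Φ.symm (interior P)) ∧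
      ∀ x ∈ S, 0 < LinearMap.det
        ((fderiv ℝ μ x : (Fin n → ℝ) →L[ℝ] (Fin n → ℝ)) :
          (Fin n → ℝ) →ₗ[ℝ] (Fin n → ℝ)) := by
  subst hP hS
  exact stmt_13_general A hA c hc (fun _ ω i => (ω i : ℝ)) q
    (fun j x _ => by simpa only [rpow_intCast] using hq j x) v (fun j => (hv j).le) hPdim μ
    fun x _ => hμ x
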